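/- Multivariate Wronskian via shifts: Let f₁,…,f_r ∈ F[x₁,…,x_n] have individual degree < d, and let t = (t₁,…,t_n) be fresh variables. Then over the field F(t), the span of the small-support shifted-derivative vectors {∂_{x^a}(f)(t) : |a|₀ ≤ ⌊log₂ r⌋, |a|_∞ < d} ⊆ F(t)^r equals the span of all shifted-derivative vectors {∂_{x^a}(f)(t) : a ∈ {0,…,d−1}ⁿ}; i.e., f is support-⌊log₂ r⌋ rank concentrated at the generic point t. -/

import Mathlib

noncomputable section

/-- The Hasse derivative `∂_{x^a}(f)` at the generic point `t`: the
coefficient of `x^a` in `f(x + t)`, a polynomial in the fresh variables `t`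
(identified with a second copy of `Fin n`). -/
def hasseGen {F : Type*} [Field F] {n : ℕ}
    (f : MvPolynomial (Fin n) F) (a : Fin n →₀ ℕ) : MvPolynomial (Fin n) F :=
  MvPolynomial.coeff a
    (MvPolynomial.sumAlgEquiv F (Fin n) (Fin n)
      (MvPolynomial.bind₁
        (fun j => MvPolynomial.X (Sum.inl j) + MvPolynomial.X (Sum.inr j)) f))

theorem exists_sum_mul_choose_ne_zero {F : Type*} [Field F] {I : Finset ℕ} {D : ℕ → F} {i : ℕ}
    (hi : i ∈ I) (hD : D i ≠ 0) : ∃ k, ∑ l ∈ I, D l * (l.choose k : F) ≠ 0 := by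
  classical
  have hne : (I.filter (fun l => D l ≠ 0)).Nonempty := ⟨i, by simp [hi, hD]⟩
  obtain ⟨k, hk, hmax⟩ := Finset.exists_max_image _ id hne
  rw [Finset.mem_filter] at hk
  refine ⟨k, ?_⟩
  rw [Finset.sum_eq_single k]
  · simpa using hk.2
  · intro l hl hlk
    by_cases h : D l = 0
    · simp [h]
    · have := hmax l (by simp [hl, h])
      have hlt : l < k := lt_of_le_of_ne this hlk
      simp [Nat.choose_eq_zero_of_lt hlt]
  · exact fun h => absurd hk.1 h

theorem exists_two_mul_card_fiber_le {α β : Type*} [DecidableEq β] (B : Finset α) (g : α → β)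
    {x y : α} (hx : x ∈ B) (hy : y ∈ B) (hxy : g x ≠ g y) :
    ∃ z ∈ B, 2 * (B.filter (fun b => g b = g z)).card ≤ B.card := by
  classical
  have hdisj : Disjoint (B.filter (fun b => g b = g x)) (B.filter (fun b => g b = g y)) := by
    rw [Finset.disjoint_filter]
    intro b _ h1 h2
    exact hxy (h1.symm.trans h2)
  have hcard := Finset.card_le_card
    (Finset.union_subset (B.filter_subset (fun b => g b = g x))
      (B.filter_subset (fun b => g b = g y)))
  rw [Finset.card_union_of_disjoint hdisj] at hcard
  rcases le_total (B.filter (fun b => g b = g x)).card (B.filter (fun b => g b = g y)).card with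
    h | h
  · exact ⟨x, hx, by omega⟩
  · exact ⟨y, hy, by omega⟩

/-- A nonzero polynomial `∑ c b x^b` with `B.card` terms, expanded around the point `(1,…,1)`, has
a nonzero term in at most `log₂ B.card` variables. -/
theorem exists_small_support_sum_choose_ne_zero {F : Type*} [Field F] {n : ℕ}
    (B : Finset (Fin n → ℕ)) (hB : B.Nonempty) (c : (Fin n → ℕ) → F) (hc : ∀ b ∈ B, c b ≠ 0) :
    ∃ a : Fin n → ℕ, 2 ^ (Finset.univ.filter (fun j => a j ≠ 0)).card ≤ B.card ∧
      ∑ b ∈ B, c b * ∏ j, ((b j).choose (a j) : F) ≠ 0 := by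
  classical
  induction n with
  | zero =>
    obtain ⟨b, hb⟩ := hB
    have hBb : B = {b} := Finset.eq_singleton_iff_unique_mem.2
      ⟨hb, fun _ _ => Subsingleton.elim _ _⟩
    refine ⟨b, by simp [hBb], ?_⟩
    simpa [hBb] using hc b hb
  | succ n ih =>
    have fiber : ∀ z ∈ B, ∃ a : Fin n → ℕ,
        2 ^ (Finset.univ.filter (fun j => a j ≠ 0)).card ≤
          (B.filter (fun b => b 0 = z 0)).card ∧
        ∑ b ∈ B.filter (fun b => b 0 = z 0),
          c b * ∏ j : Fin n, ((b j.succ).choose (a j) : F) ≠ 0 := by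
      intro z hz
      have hinj : Set.InjOn (fun b : Fin (n + 1) → ℕ => Fin.tail b)
          (B.filter (fun b => b 0 = z 0)) := by
        intro b hb b' hb' h
        simp only [Finset.coe_filter, Set.mem_ofPred_eq] at hb hb'
        rw [← Fin.cons_self_tail b, ← Fin.cons_self_tail b', hb.2, hb'.2]
        exact congrArg _ h
      have hcons : ∀ b ∈ B.filter (fun b => b 0 = z 0),
          (Fin.cons (z 0) (Fin.tail b) : Fin (n + 1) → ℕ) = b := by
        intro b hb
        rw [← (Finset.mem_filter.1 hb).2, Fin.cons_self_tail]
      obtain ⟨a, ha, hs⟩ := ih ((B.filter (fun b => b 0 = z 0)).image fun b => Fin.tail b)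
        ⟨Fin.tail z, Finset.mem_image_of_mem _ (by simp [hz])⟩
        (fun b => c (Fin.cons (z 0) b)) (by
          intro b hb
          obtain ⟨b', hb', rfl⟩ := Finset.mem_image.1 hb
          rw [hcons b' hb']
          exact hc b' (Finset.mem_filter.1 hb').1)
      rw [Finset.card_image_of_injOn hinj] at ha
      rw [Finset.sum_image hinj] at hs
      refine ⟨a, ha, ?_⟩
      convert hs using 1
      refine Finset.sum_congr rfl fun b hb => ?_
      rw [hcons b hb]
      rfl
    have card_cons : ∀ (k : ℕ) (a : Fin n → ℕ),
        (Finset.univ.filter (fun j => (Fin.cons k a : Fin (n + 1) → ℕ) j ≠ 0)).card =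
          (if k ≠ 0 then 1 else 0) + (Finset.univ.filter (fun j => a j ≠ 0)).card := by
      intro k a
      simp [Finset.card_filter, Fin.sum_univ_succ]
    by_cases hconst : ∃ x ∈ B, ∃ y ∈ B, x 0 ≠ y 0
    · obtain ⟨x, hx, y, hy, hxy⟩ := hconst
      obtain ⟨z, hz, hzc⟩ := exists_two_mul_card_fiber_le B (fun b => b 0) hx hy hxy
      obtain ⟨a, ha, hs⟩ := fiber z hz
      obtain ⟨k, hk⟩ := exists_sum_mul_choose_ne_zero (I := B.image fun b => b 0)
        (D := fun i => ∑ b ∈ B.filter (fun b => b 0 = i),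
          c b * ∏ j : Fin n, ((b j.succ).choose (a j) : F))
        (Finset.mem_image_of_mem _ hz) hs
      refine ⟨Fin.cons k a, ?_, ?_⟩
      · rw [card_cons]
        calc 2 ^ ((if k ≠ 0 then 1 else 0) + (Finset.univ.filter (fun j => a j ≠ 0)).card)
            ≤ 2 ^ (1 + (Finset.univ.filter (fun j => a j ≠ 0)).card) :=
              Nat.pow_le_pow_right (by norm_num) (by split_ifs <;> omega)
          _ = 2 * 2 ^ (Finset.univ.filter (fun j => a j ≠ 0)).card := by rw [pow_add, pow_one]
          _ ≤ B.card := (Nat.mul_le_mul_left 2 ha).trans hzc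
      · convert hk using 1
        rw [← Finset.sum_fiberwise_of_maps_to (g := fun b : Fin (n + 1) → ℕ => b 0)
          (t := B.image fun b => b 0) (fun b hb => Finset.mem_image_of_mem _ hb)]
        refine Finset.sum_congr rfl fun i _ => ?_
        rw [Finset.sum_mul]
        refine Finset.sum_congr rfl fun b hb => ?_
        rw [Fin.prod_univ_succ, (Finset.mem_filter.1 hb).2]
        simp only [Fin.cons_zero, Fin.cons_succ]
        ring
    · push Not at hconst
      obtain ⟨z, hz⟩ := hB
      have hfil : B.filter (fun b => b 0 = z 0) = B :=
        Finset.filter_true_of_mem fun b hb => hconst b hb z hz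
      obtain ⟨a, ha, hs⟩ := fiber z hz
      rw [hfil] at ha hs
      refine ⟨Fin.cons 0 a, by simpa [card_cons] using ha, ?_⟩
      simpa [Fin.prod_univ_succ] using hs

theorem card_le_of_triangular_pairing {F ι : Type*} [Field F] [LinearOrder ι] {r : ℕ}
    (B : Finset ι) (u w : ι → Fin r → F) (hdiag : ∀ b ∈ B, ∑ i, u b i * w b i ≠ 0)
    (hoff : ∀ b ∈ B, ∀ b' ∈ B, b < b' → ∑ i, u b i * w b' i = 0) : B.card ≤ r := by
  classical
  let M : Matrix B (Fin r) F := fun b i => u b i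
  let N : Matrix (Fin r) B F := fun i b => w b i
  have hdet : (M * N).det ≠ 0 := by
    rw [Matrix.det_of_isLowerTriangular]
    · exact Finset.prod_ne_zero_iff.2 fun b _ => hdiag b b.2
    · intro b b' h
      exact hoff b b.2 b' b'.2 h
  have hunit : IsUnit (M * N) := (Matrix.isUnit_iff_isUnit_det _).2 hdet.isUnit
  calc B.card = (M * N).rank := by rw [Matrix.rank_of_isUnit _ hunit, Fintype.card_coe]
    _ ≤ M.rank := Matrix.rank_mul_le_left M N
    _ ≤ r := by simpa using M.rank_le_card_width

open MvPolynomial in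
theorem monomial_mul_hasseGen_monomial {F : Type*} [Field F] {n : ℕ} (a b : Fin n →₀ ℕ) (c : F) :
    monomial a 1 * hasseGen (monomial b c) a =
      monomial b (c * ∏ j, ((b j).choose (a j) : F)) := by
  classical
  have hexp : (sumAlgEquiv F (Fin n) (Fin n)
      (bind₁ (fun j => X (Sum.inl j) + X (Sum.inr j)) (monomial b c))) =
      ∑ k ∈ Fintype.piFinset (fun j => Finset.range (b j + 1)),
        monomial (Finsupp.equivFunOnFinite.symm k)
          (C c * ∏ j, ((X j : MvPolynomial (Fin n) F) ^ (b j - k j) *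
            ((b j).choose (k j) : MvPolynomial (Fin n) F))) := by
    rw [bind₁_monomial, map_mul, map_prod, sumAlgEquiv_C_inl, Finset.prod_subset
      (Finset.subset_univ _) (by
        intro j _ hj
        simp [Finsupp.notMem_support_iff.1 hj])]
    simp only [map_pow, map_add, sumAlgEquiv_X_inl, sumAlgEquiv_X_inr]
    simp only [add_pow]
    rw [Finset.prod_univ_sum, Finset.mul_sum]
    refine Finset.sum_congr rfl fun k _ => ?_
    rw [monomial_eq, Finsupp.prod_fintype _ _ (fun _ => pow_zero _)]
    simp only [map_mul, map_prod, map_pow, map_natCast, Finset.prod_mul_distrib,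
      Finsupp.equivFunOnFinite_symm_apply_apply]
    ring
  rw [hasseGen, hexp, coeff_sum]
  simp only [coeff_monomial]
  by_cases hab : a ≤ b
  · rw [Finset.sum_eq_single (a : Fin n → ℕ)]
    · have hX : (monomial b 1 : MvPolynomial (Fin n) F) =
          monomial a 1 * ∏ j, (X j : MvPolynomial (Fin n) F) ^ (b j - a j) := by
        simp only [monomial_eq, Finsupp.prod_fintype _ _ (fun _ => pow_zero _), map_one, one_mul,
          ← Finset.prod_mul_distrib, ← pow_add]
        exact Finset.prod_congr rfl fun j _ => by rw [Nat.add_sub_cancel' (hab j)]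
      rw [if_pos (by ext; simp), Finset.prod_mul_distrib,
        ← mul_one (c * _), ← C_mul_monomial, hX]
      simp only [map_mul, map_prod, map_natCast]
      ring
    · intro k _ hk
      rw [if_neg]
      rintro rfl
      exact hk (by ext; simp)
    · intro h
      exact absurd (Fintype.mem_piFinset.2 fun j =>
        Finset.mem_range.2 (Nat.lt_succ_of_le (hab j))) h
  · obtain ⟨j, hj⟩ : ∃ j, b j < a j := by
      simpa [Finsupp.le_def] using hab
    rw [Finset.sum_eq_zero, Finset.prod_eq_zero (Finset.mem_univ j)]
    · simp
    · simp [Nat.choose_eq_zero_of_lt hj]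
    · intro k hk
      rw [if_neg]
      rintro rfl
      have := Finset.mem_range.1 (Fintype.mem_piFinset.1 hk j)
      simp only [Finsupp.equivFunOnFinite_symm_apply_apply] at hj
      omega

open MvPolynomial in
theorem hasseGen_sum {F ι : Type*} [Field F] {n : ℕ} (s : Finset ι)
    (g : ι → MvPolynomial (Fin n) F) (a : Fin n →₀ ℕ) :
    hasseGen (∑ i ∈ s, g i) a = ∑ i ∈ s, hasseGen (g i) a := by
  simp only [hasseGen, map_sum, coeff_sum]

open MvPolynomial in
theorem monomial_mul_hasseGen {F : Type*} [Field F] {n : ℕ} (f : MvPolynomial (Fin n) F)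
    (a : Fin n →₀ ℕ) {T : Finset (Fin n →₀ ℕ)} (hT : f.support ⊆ T) :
    monomial a 1 * hasseGen f a =
      ∑ b ∈ T, monomial b (coeff b f * ∏ j, ((b j).choose (a j) : F)) := by
  have hf : f = ∑ b ∈ T, monomial b (coeff b f) := by
    conv_lhs => rw [f.as_sum]
    refine Finset.sum_subset hT fun b _ hb => ?_
    rw [notMem_support_iff.1 hb, map_zero]
  conv_lhs => rw [hf, hasseGen_sum, Finset.mul_sum]
  exact Finset.sum_congr rfl fun b _ => monomial_mul_hasseGen_monomial a b _

open MvPolynomial in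
/-- A linear form over `F[t]` that does not vanish on all the shifted derivatives of `f` does not
vanish on some shifted derivative of small support. -/
theorem exists_small_support_sum_mul_hasseGen_ne_zero {F : Type*} [Field F] {n r d : ℕ}
    (f : Fin r → MvPolynomial (Fin n) F) (hdeg : ∀ i j, degreeOf j (f i) < d)
    (lam : Fin r → MvPolynomial (Fin n) F) {a₀ : Fin n →₀ ℕ}
    (ha₀ : ∑ i, lam i * hasseGen (f i) a₀ ≠ 0) :
    ∃ a : Fin n →₀ ℕ, (∀ j, a j < d) ∧ a.support.card ≤ Nat.log 2 r ∧
      ∑ i, lam i * hasseGen (f i) a ≠ 0 := by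
  classical
  let T : Finset (Fin n →₀ ℕ) := Finset.univ.biUnion fun i => (f i).support
  have hT : ∀ i, (f i).support ⊆ T := fun i =>
    Finset.subset_biUnion_of_mem (fun i => (f i).support) (Finset.mem_univ i)
  let h : (Fin n →₀ ℕ) → MvPolynomial (Fin n) F := fun b => ∑ i, lam i * C (coeff b (f i))
  have hcoeff : ∀ e b, coeff e (h b) = ∑ i, coeff e (lam i) * coeff b (f i) := by
    intro e b
    simp only [h, coeff_sum, mul_comm (lam _), coeff_C_mul]
    exact Finset.sum_congr rfl fun i _ => mul_comm _ _
  have hexpand : ∀ a : Fin n →₀ ℕ, monomial a 1 * ∑ i, lam i * hasseGen (f i) a =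
      ∑ b ∈ T, C (∏ j, ((b j).choose (a j) : F)) * (monomial b 1 * h b) := by
    intro a
    calc monomial a 1 * ∑ i, lam i * hasseGen (f i) a
        = ∑ i, lam i * (monomial a 1 * hasseGen (f i) a) := by
          rw [Finset.mul_sum]
          exact Finset.sum_congr rfl fun i _ => by ring
      _ = ∑ i, ∑ b ∈ T, C (∏ j, ((b j).choose (a j) : F)) *
            (monomial b 1 * (lam i * C (coeff b (f i)))) := by
          refine Finset.sum_congr rfl fun i _ => ?_
          rw [monomial_mul_hasseGen _ _ (hT i), Finset.mul_sum]
          refine Finset.sum_congr rfl fun b _ => ?_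
          rw [← mul_one (coeff b (f i) * _), ← C_mul_monomial, C_mul]
          ring
      _ = _ := by
          rw [Finset.sum_comm]
          simp only [h, Finset.mul_sum]
  -- The leading exponent `m` in `t` of `∑ b, h b (t) (t z)^b`; its coefficient is a sparse
  -- polynomial in `z`.
  let E : Finset (Fin n →₀ ℕ) := T.biUnion fun b => (monomial b 1 * h b).support
  have hE : E.Nonempty := by
    by_contra hE
    rw [Finset.not_nonempty_iff_eq_empty] at hE
    have hzero : ∀ b ∈ T, monomial b 1 * h b = 0 := by
      intro b hb
      rw [← support_eq_empty, ← Finset.subset_empty, ← hE]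
      exact Finset.subset_biUnion_of_mem (fun b => (monomial b 1 * h b).support) hb
    have hmul := hexpand a₀
    rw [Finset.sum_eq_zero (s := T) fun b hb => by rw [hzero b hb, mul_zero]] at hmul
    have hmon : (monomial a₀ 1 : MvPolynomial (Fin n) F) ≠ 0 := by
      rw [Ne, monomial_eq_zero]
      exact one_ne_zero
    exact (mul_ne_zero hmon ha₀) hmul
  obtain ⟨m, hm, hmax⟩ := Finset.exists_max_image E toLex hE
  let c : (Fin n →₀ ℕ) → F := fun b => coeff m (monomial b 1 * h b)
  let B := T.filter fun b => c b ≠ 0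
  have hBne : B.Nonempty := by
    obtain ⟨b, hb, hbm⟩ := Finset.mem_biUnion.1 hm
    exact ⟨b, Finset.mem_filter.2 ⟨hb, mem_support_iff.1 hbm⟩⟩
  have hc : ∀ b ∈ B, b ≤ m ∧ coeff (m - b) (h b) ≠ 0 := by
    intro b hb
    have hcb := (Finset.mem_filter.1 hb).2
    simp only [c, coeff_monomial_mul', one_mul] at hcb
    exact ite_ne_right_iff.1 hcb
  have hcard : B.card ≤ r := by
    rw [← Finset.card_map toLex.toEmbedding]
    refine card_le_of_triangular_pairing _ (fun b i => coeff (m - ofLex b) (lam i))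
      (fun b i => coeff (ofLex b) (f i)) ?_ ?_
    · intro b Hb
      obtain ⟨b, hb, rfl⟩ := Finset.mem_map.1 Hb
      simpa [hcoeff] using (hc b hb).2
    · intro b Hb b' Hb' hlt
      obtain ⟨b, hb, rfl⟩ := Finset.mem_map.1 Hb
      obtain ⟨b', hb', rfl⟩ := Finset.mem_map.1 Hb'
      simp only [Equiv.coe_toEmbedding, ofLex_toLex] at hlt ⊢
      by_contra hne
      rw [← hcoeff] at hne
      have hmem : b' + (m - b) ∈ E := Finset.mem_biUnion.2
        ⟨b', (Finset.mem_filter.1 hb').1, by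
          rw [mem_support_iff, coeff_monomial_mul, one_mul]
          exact hne⟩
      have hle := hmax _ hmem
      have hlt' : toLex b + toLex (m - b) < toLex b' + toLex (m - b) :=
        add_lt_add_left hlt _
      rw [← toLex_add, ← toLex_add, add_tsub_cancel_of_le (hc b hb).1] at hlt'
      exact absurd hle (not_le.2 hlt')
  let e : (Fin n →₀ ℕ) ≃ (Fin n → ℕ) := Finsupp.equivFunOnFinite
  obtain ⟨a, ha, hs⟩ := exists_small_support_sum_choose_ne_zero (B.map e.toEmbedding)
    (hBne.map) (fun b => c (e.symm b)) (by
      intro b Hb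
      obtain ⟨b, hb, rfl⟩ := Finset.mem_map.1 Hb
      simpa using (Finset.mem_filter.1 hb).2)
  simp only [Finset.card_map, Finset.sum_map, Equiv.coe_toEmbedding, Equiv.symm_apply_apply,
    e, Finsupp.equivFunOnFinite_apply] at ha hs
  refine ⟨Finsupp.equivFunOnFinite.symm a, ?_, ?_, ?_⟩
  · obtain ⟨b, hb, hbne⟩ := Finset.exists_ne_zero_of_sum_ne_zero hs
    obtain ⟨i, -, hi⟩ := Finset.mem_biUnion.1 (Finset.mem_filter.1 hb).1
    intro j
    have hj := Finset.prod_ne_zero_iff.1 (right_ne_zero_of_mul hbne) j (Finset.mem_univ j)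
    have hle : a j ≤ b j := by
      by_contra hlt
      exact hj (by rw [Nat.choose_eq_zero_of_lt (not_le.1 hlt), Nat.cast_zero])
    exact (hle.trans (monomial_le_degreeOf j hi)).trans_lt (hdeg i j)
  · have hsupp : (Finsupp.equivFunOnFinite.symm a).support =
        Finset.univ.filter fun j => a j ≠ 0 := by
      ext j
      simp
    rw [hsupp]
    refine Nat.le_log_of_pow_le (by norm_num) (ha.trans hcard)
  · intro hzero
    have hm0 := congrArg (coeff m) (hexpand (Finsupp.equivFunOnFinite.symm a))
    rw [hzero, mul_zero, coeff_zero, coeff_sum] at hm0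
    apply hs
    rw [hm0, Finset.sum_filter]
    refine Finset.sum_congr rfl fun b _ => ?_
    rw [coeff_C_mul, mul_comm]
    simp only [Finsupp.equivFunOnFinite_symm_apply_apply]
    split_ifs with hb
    · rfl
    · rw [show coeff m (monomial b 1 * h b) = 0 from not_not.1 hb, mul_zero]

/-- multivariate Wronskian via shifts: for `f₁,…,f_r` of
individual degree `< d`, over the rational function field `F(t)` the span of
the shifted-derivative vectors `∂_{x^a}(f)(t)` with `|a|₀ ≤ ⌊log₂ r⌋` and
`|a|_∞ < d` equals the span of all `∂_{x^a}(f)(t)` with `a ∈ {0,…,d-1}ⁿ`: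
`f` is support-`⌊log₂ r⌋` rank concentrated at the generic point `t`. -/
theorem stmt_18 {F : Type*} [Field F] {n r d : ℕ}
    (f : Fin r → MvPolynomial (Fin n) F)
    (hdeg : ∀ i j, MvPolynomial.degreeOf j (f i) < d) :
    Submodule.span (FractionRing (MvPolynomial (Fin n) F))
        {v : Fin r → FractionRing (MvPolynomial (Fin n) F) |
          ∃ a : Fin n →₀ ℕ, (∀ j, a j < d) ∧ a.support.card ≤ Nat.log 2 r ∧
            v = fun i => algebraMap (MvPolynomial (Fin n) F) _
              (hasseGen (f i) a)}
      = Submodule.span (FractionRing (MvPolynomial (Fin n) F))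
        {v : Fin r → FractionRing (MvPolynomial (Fin n) F) |
          ∃ a : Fin n →₀ ℕ, (∀ j, a j < d) ∧
            v = fun i => algebraMap (MvPolynomial (Fin n) F) _
              (hasseGen (f i) a)} := by
  refine le_antisymm (Submodule.span_mono ?_) (Submodule.span_le.2 ?_)
  · rintro v ⟨a, had, -, rfl⟩
    exact ⟨a, had, rfl⟩
  rintro v ⟨a₀, -, rfl⟩
  by_contra hv
  obtain ⟨φ, hφ, hker⟩ := Submodule.exists_le_ker_of_notMem hv
  obtain ⟨q, hq⟩ := IsLocalization.exist_integer_multiples_of_finite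
    (nonZeroDivisors (MvPolynomial (Fin n) F))
    (fun i : Fin r => φ fun j => if i = j then 1 else 0)
  choose lam hlam using hq
  have hpair : ∀ a : Fin n →₀ ℕ,
      algebraMap (MvPolynomial (Fin n) F) (FractionRing (MvPolynomial (Fin n) F))
        (∑ i, lam i * hasseGen (f i) a) =
      algebraMap (MvPolynomial (Fin n) F) (FractionRing (MvPolynomial (Fin n) F)) q *
        φ fun i => algebraMap (MvPolynomial (Fin n) F) _ (hasseGen (f i) a) := by
    intro a
    rw [LinearMap.pi_apply_eq_sum_univ, map_sum, Finset.mul_sum]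
    refine Finset.sum_congr rfl fun i _ => ?_
    rw [map_mul, hlam, Algebra.smul_def, smul_eq_mul]
    ring
  have hq0 : algebraMap (MvPolynomial (Fin n) F) (FractionRing (MvPolynomial (Fin n) F)) q ≠ 0 :=
    IsFractionRing.to_map_ne_zero_of_mem_nonZeroDivisors q.2
  obtain ⟨a, had, hcard, hne⟩ := exists_small_support_sum_mul_hasseGen_ne_zero f hdeg lam
    (a₀ := a₀) (by
      intro h0
      have := hpair a₀
      rw [h0, map_zero] at this
      exact mul_ne_zero hq0 hφ this.symm)
  apply hne
  apply IsFractionRing.injective (MvPolynomial (Fin n) F)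
    (FractionRing (MvPolynomial (Fin n) F))
  rw [hpair, map_zero, LinearMap.mem_ker.1 (hker (Submodule.subset_span ⟨a, had, hcard, rfl⟩)),
    mul_zero]
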